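/- Let A be a one-register alternating finite-memory automaton over an infinite alphabet Σ. Then the set |L(A)| = { |σ| : σ ∈ L(A) } of lengths of words accepted by A is semilinear. -/

import Mathlib

/-- A one-register alternating finite-memory automaton over the alphabet `Sigma`,
with states `S`. -/
structure AFMA (Sigma : Type) (S : Type) where
  s0 : S
  F : Set S
  Δ : Finset Sigma
  θ0 : Sigma
  θ0_notin : θ0 ∉ Δ
  μΔ : S → Sigma → Set (Set S)
  μeq : S → Set (Set S)
  μne : S → Set (Set S × Set S)

namespace AFMA

variable {Sigma S : Type}

open Classical

/-- The induced transition function `μ^c` on a configuration `c` and a letter `σ`: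
a set of sets of configurations. -/
noncomputable def muC (A : AFMA Sigma S) (c : S × Sigma) (σ : Sigma) : Set (Set (S × Sigma)) :=
  if σ ∈ A.Δ then {D | ∃ Q ∈ A.μΔ c.1 σ, D = Q ×ˢ ({c.2} : Set Sigma)}
  else if σ = c.2 then {D | ∃ Q ∈ A.μeq c.1, D = Q ×ˢ ({c.2} : Set Sigma)}
  else {D | ∃ p ∈ A.μne c.1, D = p.1 ×ˢ ({c.2} : Set Sigma) ∪ p.2 ×ˢ ({σ} : Set Sigma)}

/-- `SetStep A C σ C'` : `C' ∈ μ^c(C, σ)`, i.e. `C'` is a union, over all `c ∈ C`,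
of chosen elements of `μ^c(c, σ)`. -/
def SetStep (A : AFMA Sigma S) (C : Set (S × Sigma)) (σ : Sigma)
    (C' : Set (S × Sigma)) : Prop :=
  ∃ g : S × Sigma → Set (S × Sigma),
    (∀ c ∈ C, g c ∈ A.muC c σ) ∧ C' = ⋃ c ∈ C, g c

/-- `Steps A C w C'` : reading the word `w` from the configuration set `C`
the automaton can reach the configuration set `C'`. -/
inductive Steps (A : AFMA Sigma S) :
    Set (S × Sigma) → List Sigma → Set (S × Sigma) → Prop
  | nil (C) : Steps A C [] C
  | cons {C C' C'' σ w} : A.SetStep C σ C' → Steps A C' w C'' → Steps A C (σ :: w) C''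

/-- A set of configurations is accepting if all its states are accepting. -/
def Accepting (A : AFMA Sigma S) (C : Set (S × Sigma)) : Prop :=
  ∀ c ∈ C, c.1 ∈ A.F

/-- The language accepted by `A`. -/
def Lang (A : AFMA Sigma S) : Set (List Sigma) :=
  {w | ∃ C, A.Steps {(A.s0, A.θ0)} w C ∧ A.Accepting C}

/-- The action of a permutation of the alphabet on a set of configurations. -/
def mapConfigs (α : Equiv.Perm Sigma) (C : Set (S × Sigma)) : Set (S × Sigma) :=
  (fun c => (c.1, α c.2)) '' C

end AFMA

/-- A `Δ`-permutation of the alphabet: a bijection fixing every distinguished letter. -/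
def IsDeltaPerm {Sigma : Type} (Δ : Finset Sigma) (α : Equiv.Perm Sigma) : Prop :=
  ∀ δ ∈ Δ, α δ = δ

/-!
The letters of a word matter only through equality and membership in `Δ`, so acceptance of a length
from a configuration set `C` is invariant under `Δ`-permutations of `C`; it is also inherited by
subsets of `C`. Hence it is governed by the vector in `ℕ ^ (2 ^ S)` that counts, for each set `Q` of
states, the register contents occurring with exactly the states in `Q`. Let `D n` be the downward
closure of the vectors of the configuration sets from which a word of length `n` is accepted.

Every lower set of `ℕ ^ k` is a finite union of products of lower sets of `ℕ`, so by the lemmas of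
Dickson and Higman the lower sets of `ℕ ^ k` are well-quasi-ordered by inclusion. Therefore
`D m ⊆ D n` for some `m < n`: from any configuration set, acceptance of length `m` implies
acceptance of length `n`. After `k` initial steps the same holds for `m + k` and `n + k`, so the set
of accepted lengths is closed under adding `n - m` from `m` on, and such a set is semilinear.
-/

section Progression

/-- The linear set `{a + i * b : i ∈ ℕ}` of the paper, with offset and period packed into a pair. -/
def progression (q : ℕ × ℕ) : Set ℕ := {n | ∃ i : ℕ, n = q.1 + i * q.2}

theorem progression_period_zero (a : ℕ) : progression (a, 0) = {a} := by
  ext n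
  simp [progression]

theorem eq_progression_sInf {s : Set ℕ} {p : ℕ} (hs : s.Nonempty)
    (hmod : ∀ a ∈ s, ∀ b ∈ s, a ≡ b [MOD p]) (hadd : ∀ a ∈ s, a + p ∈ s) :
    s = progression (sInf s, p) := by
  have hmin : sInf s ∈ s := Nat.sInf_mem hs
  apply Set.Subset.antisymm
  · intro n hn
    have hle : sInf s ≤ n := Nat.sInf_le hn
    obtain ⟨i, hi⟩ := (Nat.modEq_iff_dvd' hle).1 (hmod _ hmin n hn)
    exact ⟨i, by rw [mul_comm i p, ← hi, Nat.add_sub_cancel' hle]⟩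
  · rintro _ ⟨i, rfl⟩
    induction i with
    | zero => simpa using hmin
    | succ i ih => simpa [add_mul, add_assoc] using hadd _ ih

theorem exists_finset_eq_biUnion_progression {s : Set ℕ} {N p : ℕ} (hp : 0 < p)
    (hadd : ∀ k ∈ s, N ≤ k → k + p ∈ s) :
    ∃ T : Finset (ℕ × ℕ), s = ⋃ q ∈ T, progression q := by
  classical
  let residueClass (r : ℕ) : Set ℕ := {k ∈ s | N ≤ k ∧ k % p = r}
  have hclass (r : ℕ) (hr : (residueClass r).Nonempty) :
      residueClass r = progression (sInf (residueClass r), p) := by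
    refine eq_progression_sInf hr (fun a ha b hb => ha.2.2.trans hb.2.2.symm) ?_
    rintro a ⟨has, haN, har⟩
    exact ⟨hadd a has haN, by omega, by rwa [Nat.add_mod_right]⟩
  refine ⟨{k ∈ Finset.range N | k ∈ s}.image (fun k => (k, 0)) ∪
    {r ∈ Finset.range p | (residueClass r).Nonempty}.image
      (fun r => (sInf (residueClass r), p)), ?_⟩
  rw [Finset.set_biUnion_union, Finset.set_biUnion_finset_image, Finset.set_biUnion_finset_image]
  ext k
  simp only [progression_period_zero, Set.mem_union, Set.mem_iUnion, Finset.mem_filter,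
    Finset.mem_range, Set.mem_singleton_iff, exists_prop]
  constructor
  · intro hk
    rcases lt_or_ge k N with hkN | hkN
    · exact Or.inl ⟨k, ⟨hkN, hk⟩, rfl⟩
    · have hmem : k ∈ residueClass (k % p) := ⟨hk, hkN, rfl⟩
      exact Or.inr ⟨k % p, ⟨Nat.mod_lt k hp, k, hmem⟩, hclass _ ⟨k, hmem⟩ ▸ hmem⟩
  · rintro (⟨_, ⟨-, hk⟩, rfl⟩ | ⟨r, ⟨-, hr⟩, hk⟩)
    · exact hk
    · rw [← hclass r hr] at hk
      exact hk.1

end Progression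

section LowerSets

theorem wellFoundedLT_lowerSet {α : Type*} [Preorder α] [WellQuasiOrderedLE α] :
    WellFoundedLT (LowerSet α) := by
  rw [WellFoundedLT, isWellFounded_iff, RelEmbedding.wellFounded_iff_isEmpty]
  refine ⟨fun f => ?_⟩
  have hlt {m n : ℕ} (hmn : m < n) : f n < f m := f.map_rel_iff.2 hmn
  choose x hx hx' using fun n : ℕ =>
    Set.exists_of_ssubset (LowerSet.coe_ssubset_coe.2 (hlt n.lt_succ_self))
  obtain ⟨m, n, hmn, hle⟩ := wellQuasiOrdered_le x
  have hanti : f n ≤ f (m + 1) := by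
    rcases (Nat.succ_le_of_lt hmn).eq_or_lt with heq | hlt'
    · exact heq ▸ le_rfl
    · exact (hlt hlt').le
  exact hx' m ((f (m + 1)).lower hle (hanti (hx n)))

theorem directedOn_of_supIrred {α : Type*} [Preorder α] {D : LowerSet α} (hD : SupIrred D) :
    DirectedOn (· ≤ ·) (D : Set α) := by
  intro x hx y hy
  by_contra! hxy
  have hcover : D ≤ (UpperSet.Ici x).compl ⊔ (UpperSet.Ici y).compl := by
    intro z hz
    by_cases hxz : x ≤ z
    · exact Or.inr (hxy z hz hxz)
    · exact Or.inl hxz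
  rcases hD.supPrime.2 hcover with hDx | hDy
  · exact hDx hx le_rfl
  · exact hDy hy le_rfl

theorem exists_rel_of_sublistForall₂ {α β : Type*} {R : α → β → Prop} {l : List α} {l' : List β}
    (h : List.SublistForall₂ R l l') {a : α} (ha : a ∈ l) : ∃ b ∈ l', R a b := by
  induction h with
  | nil => simp at ha
  | cons hR _ ih =>
    rcases List.mem_cons.1 ha with rfl | ha
    · exact ⟨_, List.mem_cons_self, hR⟩
    · exact (ih ha).imp fun _ => And.imp_left (List.mem_cons_of_mem _)
  | cons_right _ ih => exact (ih ha).imp fun _ => And.imp_left (List.mem_cons_of_mem _)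

theorem wellQuasiOrderedLE_of_isPWO_supIrred {L : Type*} [SemilatticeSup L] [OrderBot L]
    [WellFoundedLT L] (h : {a : L | SupIrred a}.IsPWO) : WellQuasiOrderedLE L := by
  refine ⟨fun a => ?_⟩
  -- Higman's lemma for the lists of irreducibles: if every irreducible of `a m` lies below one of
  -- `a n`, then `a m ≤ a n`.
  choose s hs hirr using fun n => exists_supIrred_decomposition (a n)
  obtain ⟨m, n, hmn, hle⟩ :=
    (Set.PartiallyWellOrderedOn.partiallyWellOrderedOn_sublistForall₂ (· ≤ ·) h).exists_lt
      (f := fun n => (s n).toList) fun n b hb => hirr n (Finset.mem_toList.1 hb)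
  refine ⟨m, n, hmn, ?_⟩
  rw [← hs m, ← hs n]
  refine Finset.sup_le fun b hb => ?_
  obtain ⟨c, hc, hbc⟩ := exists_rel_of_sublistForall₂ hle (Finset.mem_toList.2 hb)
  exact hbc.trans (Finset.le_sup (f := id) (Finset.mem_toList.1 hc))

variable {ι : Type*} {α : ι → Type*} [∀ i, Preorder (α i)]

/-- The product of a family of lower sets, as a lower set of the product order. -/
def lowerSetPi (E : ∀ i, LowerSet (α i)) : LowerSet (∀ i, α i) where
  carrier := {x | ∀ i, x i ∈ E i}
  lower' _ _ hyx hx i := (E i).lower (hyx i) (hx i)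

theorem lowerSetPi_mono : Monotone (lowerSetPi (α := α)) :=
  fun _ _ hEE' _ hx i => hEE' i (hx i)

theorem supIrred_mem_range_lowerSetPi [Finite ι] {D : LowerSet (∀ i, α i)} (hD : SupIrred D) :
    D ∈ Set.range (lowerSetPi (α := α)) := by
  have hdir := directedOn_iff_directed.1 (directedOn_of_supIrred hD)
  have hne : Nonempty (D : Set (∀ i, α i)) :=
    (LowerSet.coe_nonempty.2 hD.ne_bot).to_subtype
  refine ⟨fun i => lowerClosure ((fun x => x i) '' (D : Set (∀ i, α i))), ?_⟩
  ext x
  constructor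
  · intro hx
    have hproj (i : ι) : ∃ y : (D : Set (∀ i, α i)), x i ≤ y.1 i := by
      obtain ⟨_, ⟨y, hyD, rfl⟩, hxy⟩ := hx i
      exact ⟨⟨y, hyD⟩, hxy⟩
    choose y hxy using hproj
    obtain ⟨z, hz⟩ := hdir.finite_le y
    exact D.lower (fun i => (hxy i).trans (hz i i)) z.2
  · exact fun hx i => subset_lowerClosure ⟨x, hx, rfl⟩

theorem wellQuasiOrderedLE_lowerSet_pi [Finite ι] [∀ i, WellQuasiOrderedLE (LowerSet (α i))] :
    WellQuasiOrderedLE (LowerSet (∀ i, α i)) := by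
  have (i : ι) : WellQuasiOrderedLE (α i) :=
    ⟨fun x => (wellQuasiOrdered_le fun n => LowerSet.Iic (x n)).imp fun _ ⟨n, hmn, hle⟩ =>
      ⟨n, hmn, LowerSet.Iic_le.1 hle⟩⟩
  have : WellFoundedLT (LowerSet (∀ i, α i)) := wellFoundedLT_lowerSet
  apply wellQuasiOrderedLE_of_isPWO_supIrred
  have hrange : (Set.range (lowerSetPi (α := α))).IsPWO := by
    rw [← Set.image_univ]
    exact (Set.isPWO_of_wellQuasiOrderedLE _).image_of_monotone lowerSetPi_mono
  exact hrange.mono fun D hD => supIrred_mem_range_lowerSetPi hD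

theorem wellQuasiOrderedLE_lowerSet_of_linearOrder {α : Type*} [LinearOrder α] [WellFoundedLT α] :
    WellQuasiOrderedLE (LowerSet α) := by
  have : WellFoundedLT (LowerSet α) := wellFoundedLT_lowerSet
  infer_instance

end LowerSets

section Embeddings

variable {α : Type*}

theorem exists_injOn_of_ncard_fiber_le {β κ : Type*} [Nonempty β] {s : Set α} {t : Set β}
    (hs : s.Finite) (c : α → κ) (d : β → κ)
    (h : ∀ q, {a ∈ s | c a = q}.ncard ≤ {b ∈ t | d b = q}.ncard) :
    ∃ f : α → β, Set.MapsTo f s t ∧ Set.InjOn f s ∧ ∀ a ∈ s, d (f a) = c a := by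
  have hfiber (q : κ) : {a ∈ s | c a = q}.encard ≤ {b ∈ t | d b = q}.encard := by
    rw [← (hs.sep _).cast_ncard_eq]
    exact (Nat.cast_le.2 (h q)).trans (Set.ncard_le_encard _)
  choose g hmaps hinj using fun q => (hs.sep _).exists_injOn_of_encard_le (hfiber q)
  have hmem : ∀ a ∈ s, g (c a) a ∈ t ∧ d (g (c a) a) = c a := fun a ha => hmaps (c a) ⟨ha, rfl⟩
  refine ⟨fun a => g (c a) a, fun a ha => (hmem a ha).1, ?_, fun a ha => (hmem a ha).2⟩
  intro a ha b hb hab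
  have hcolor : c a = c b := by
    rw [← (hmem a ha).2, ← (hmem b hb).2]
    exact congrArg d hab
  refine hinj (c b) ⟨ha, hcolor⟩ ⟨hb, rfl⟩ ?_
  simpa only [hcolor] using hab

theorem exists_perm_fixing_of_injOn {s Δ : Set α} {f : α → α} (hs : s.Finite)
    (hf : Set.InjOn f s) (hsΔ : ∀ a ∈ s, a ∉ Δ) (hfΔ : ∀ a ∈ s, f a ∉ Δ) :
    ∃ σ : Equiv.Perm α, (∀ δ ∈ Δ, σ δ = δ) ∧ ∀ a ∈ s, σ (f a) = a := by
  classical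
  have := hs.to_subtype
  let image : s ↪ {x // x ∉ Δ} := ⟨fun a => ⟨f a, hfΔ a a.2⟩, fun a b hab =>
    Subtype.ext (hf a.2 b.2 (congrArg Subtype.val hab))⟩
  let inclusion : s ↪ {x // x ∉ Δ} := Set.embeddingOfSubset s {x | x ∉ Δ} hsΔ
  obtain ⟨τ, hτ⟩ := Equiv.Perm.exists_smul_eq_embedding image inclusion
  refine ⟨Equiv.Perm.ofSubtype τ,
    fun δ hδ => Equiv.Perm.ofSubtype_apply_of_not_mem τ (not_not.2 hδ), fun a ha => ?_⟩
  have hτa : τ ⟨f a, hfΔ a ha⟩ = ⟨a, hsΔ a ha⟩ := DFunLike.congr_fun hτ ⟨a, ha⟩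
  rw [Equiv.Perm.ofSubtype_apply_of_mem τ (hfΔ a ha), hτa]

end Embeddings

theorem IsDeltaPerm.apply_mem_iff {Sigma : Type} {Δ : Finset Sigma} {α : Equiv.Perm Sigma}
    (hα : IsDeltaPerm Δ α) {σ : Sigma} : α σ ∈ Δ ↔ σ ∈ Δ := by
  refine ⟨fun h => ?_, fun h => (hα σ h).symm ▸ h⟩
  rwa [← α.injective (hα _ h)]

namespace AFMA

variable {Sigma S : Type} {A : AFMA Sigma S} {C C' D D' : Set (S × Sigma)} {c d : S × Sigma}
  {σ : Sigma} {α : Equiv.Perm Sigma} {m n : ℕ}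

section Simulation

theorem mapConfigs_prod_singleton (α : Equiv.Perm Sigma) (Q : Set S) (θ : Sigma) :
    mapConfigs α (Q ×ˢ {θ}) = Q ×ˢ {α θ} := by
  simpa using! Set.prodMap_image_prod id α Q {θ}

theorem mem_mapConfigs_iff : c ∈ mapConfigs α C ↔ (c.1, α.symm c.2) ∈ C := by
  refine ⟨?_, fun h => ⟨_, h, by simp⟩⟩
  rintro ⟨d, hd, rfl⟩
  simpa using hd

theorem mapConfigs_mem_muC (hα : IsDeltaPerm A.Δ α) (hD : D ∈ A.muC c σ) :
    mapConfigs α D ∈ A.muC (c.1, α c.2) (α σ) := by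
  unfold muC at hD ⊢
  split_ifs at hD with hσ hc
  · obtain ⟨Q, hQ, rfl⟩ := hD
    rw [if_pos (hα.apply_mem_iff.2 hσ), hα σ hσ]
    exact ⟨Q, hQ, mapConfigs_prod_singleton α Q c.2⟩
  · obtain ⟨Q, hQ, rfl⟩ := hD
    rw [if_neg (hα.apply_mem_iff.not.2 hσ), if_pos (congrArg α hc)]
    exact ⟨Q, hQ, mapConfigs_prod_singleton α Q c.2⟩
  · obtain ⟨p, hp, rfl⟩ := hD
    rw [if_neg (hα.apply_mem_iff.not.2 hσ), if_neg (α.injective.ne hc)]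
    refine ⟨p, hp, ?_⟩
    rw [← mapConfigs_prod_singleton, ← mapConfigs_prod_singleton]
    exact Set.image_union _ _ _

theorem SetStep.mapConfigs (hα : IsDeltaPerm A.Δ α) (h : A.SetStep C σ C') :
    A.SetStep (mapConfigs α C) (α σ) (mapConfigs α C') := by
  obtain ⟨g, hg, rfl⟩ := h
  refine ⟨fun c => AFMA.mapConfigs α (g (c.1, α.symm c.2)), ?_, ?_⟩
  · rintro _ ⟨c, hc, rfl⟩
    simpa using mapConfigs_mem_muC hα (hg c hc)
  · unfold AFMA.mapConfigs
    rw [Set.biUnion_image, Set.image_iUnion₂]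
    simp only [Equiv.symm_apply_apply]

theorem SetStep.exists_of_subset (h : A.SetStep D σ D') (hCD : C ⊆ D) :
    ∃ C' ⊆ D', A.SetStep C σ C' := by
  obtain ⟨g, hg, rfl⟩ := h
  exact ⟨⋃ c ∈ C, g c, Set.biUnion_subset_biUnion_left hCD, g, fun c hc => hg c (hCD hc), rfl⟩

theorem Steps.exists_of_subset_mapConfigs (hα : IsDeltaPerm A.Δ α) {w : List Sigma}
    (h : A.Steps D w D') (hCD : C ⊆ AFMA.mapConfigs α D) :
    ∃ C' ⊆ AFMA.mapConfigs α D', A.Steps C (w.map α) C' := by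
  induction h generalizing C with
  | nil D => exact ⟨C, hCD, .nil C⟩
  | cons hstep _ ih =>
    obtain ⟨C₁, hC₁, hstepC⟩ := (hstep.mapConfigs hα).exists_of_subset hCD
    obtain ⟨C', hC', hsteps⟩ := ih hC₁
    exact ⟨C', hC', .cons hstepC hsteps⟩

end Simulation

section AcceptedLengths

/-- Some word of length `n` is accepted from the configuration set `C`; for `C = {(s₀, θ₀)}` this
says that `n` is the length of a word of `L(A)`. -/
def AcceptsLength (A : AFMA Sigma S) (n : ℕ) (C : Set (S × Sigma)) : Prop :=
  ∃ w C', w.length = n ∧ A.Steps C w C' ∧ A.Accepting C'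

theorem lengths_lang_eq (A : AFMA Sigma S) :
    {n | ∃ w ∈ A.Lang, w.length = n} = {n | A.AcceptsLength n {(A.s0, A.θ0)}} := by
  ext n
  constructor
  · rintro ⟨w, ⟨C, hsteps, hacc⟩, hw⟩
    exact ⟨w, C, hw, hsteps, hacc⟩
  · rintro ⟨w, C, hw, hsteps, hacc⟩
    exact ⟨w, ⟨C, hsteps, hacc⟩, hw⟩

theorem acceptsLength_succ :
    A.AcceptsLength (n + 1) C ↔ ∃ σ C', A.SetStep C σ C' ∧ A.AcceptsLength n C' := by
  constructor
  · rintro ⟨_, C'', hw, _ | ⟨hstep, hsteps⟩, hacc⟩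
    · simp at hw
    · exact ⟨_, _, hstep, _, C'', Nat.succ_injective hw, hsteps, hacc⟩
  · rintro ⟨σ, C', hstep, w, C'', rfl, hsteps, hacc⟩
    exact ⟨σ :: w, C'', rfl, .cons hstep hsteps, hacc⟩

theorem AcceptsLength.of_subset_mapConfigs (hα : IsDeltaPerm A.Δ α) (hCD : C ⊆ mapConfigs α D)
    (h : A.AcceptsLength n D) : A.AcceptsLength n C := by
  obtain ⟨w, D', rfl, hsteps, hacc⟩ := h
  obtain ⟨C', hC', hstepsC⟩ := hsteps.exists_of_subset_mapConfigs hα hCD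
  refine ⟨w.map α, C', List.length_map _, hstepsC, fun c hc => ?_⟩
  exact hacc (c.1, α.symm c.2) (mem_mapConfigs_iff.1 (hC' hc))

end AcceptedLengths

section Configurations

/-- The finite subsets of `S × (Σ ∖ Δ)`, the paper's finite sets of configurations: the type
`Set (S × Sigma)` also has infinite members and members with distinguished register contents. -/
def IsConfigSet (A : AFMA Sigma S) (C : Set (S × Sigma)) : Prop :=
  C.Finite ∧ ∀ c ∈ C, c.2 ∉ A.Δ

theorem isConfigSet_initial (A : AFMA Sigma S) : A.IsConfigSet {(A.s0, A.θ0)} :=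
  ⟨Set.finite_singleton _, by simpa using A.θ0_notin⟩

theorem register_of_mem_muC (hD : D ∈ A.muC c σ) (hd : d ∈ D) :
    d.2 = c.2 ∨ d.2 = σ ∧ σ ∉ A.Δ := by
  unfold muC at hD
  split_ifs at hD with hσ
  · obtain ⟨Q, -, rfl⟩ := hD
    exact Or.inl hd.2
  · obtain ⟨Q, -, rfl⟩ := hD
    exact Or.inl hd.2
  · obtain ⟨p, -, rfl⟩ := hD
    exact hd.imp And.right fun hd => ⟨hd.2, hσ⟩

theorem IsConfigSet.setStep [Finite S] (hC : A.IsConfigSet C) (h : A.SetStep C σ C') :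
    A.IsConfigSet C' := by
  obtain ⟨g, hg, rfl⟩ := h
  have hregister : ∀ d ∈ ⋃ c ∈ C, g c, (∃ c ∈ C, d.2 = c.2) ∨ d.2 = σ ∧ σ ∉ A.Δ := by
    intro d hd
    obtain ⟨c, hc, hdc⟩ := Set.mem_iUnion₂.1 hd
    exact (register_of_mem_muC (hg c hc) hdc).imp_left fun h => ⟨c, hc, h⟩
  constructor
  · apply (Set.finite_univ.prod ((hC.1.image Prod.snd).insert σ)).subset
    intro d hd
    refine ⟨Set.mem_univ _, ?_⟩
    rcases hregister d hd with ⟨c, hc, hdc⟩ | ⟨hdσ, -⟩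
    · exact Or.inr ⟨c, hc, hdc.symm⟩
    · exact Or.inl hdσ
  · intro d hd
    rcases hregister d hd with ⟨c, hc, hdc⟩ | ⟨hdσ, hσ⟩
    · exact hdc ▸ hC.2 c hc
    · exact hdσ ▸ hσ

/-- The states that occur in `C` together with the register content `θ`. -/
def statesAt (C : Set (S × Sigma)) (θ : Sigma) : Set S := {s | (s, θ) ∈ C}

/-- The counting vector of `C`: for each set `Q` of states, the number of register contents of `C`
that occur with exactly the states in `Q`. It determines a finite `C`
up to a permutation of the letters. -/
noncomputable def registerCount (C : Set (S × Sigma)) (Q : Set S) : ℕ :=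
  {θ ∈ Prod.snd '' C | statesAt C θ = Q}.ncard

theorem exists_deltaPerm_subset_mapConfigs (hC : A.IsConfigSet C) (hD : A.IsConfigSet D)
    (h : registerCount C ≤ registerCount D) :
    ∃ α, IsDeltaPerm A.Δ α ∧ C ⊆ mapConfigs α D := by
  have : Nonempty Sigma := ⟨A.θ0⟩
  have hregC : (Prod.snd '' C).Finite := hC.1.image Prod.snd
  have hΔC : ∀ θ ∈ Prod.snd '' C, θ ∉ A.Δ := Set.forall_mem_image.2 hC.2
  have hΔD : ∀ θ ∈ Prod.snd '' D, θ ∉ A.Δ := Set.forall_mem_image.2 hD.2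
  obtain ⟨f, hmaps, hinj, hstates⟩ :=
    exists_injOn_of_ncard_fiber_le hregC (statesAt C) (statesAt D) h
  obtain ⟨α, hα, hαf⟩ := exists_perm_fixing_of_injOn (Δ := A.Δ) hregC hinj hΔC
    fun θ hθ => hΔD _ (hmaps hθ)
  refine ⟨α, hα, fun c hc => mem_mapConfigs_iff.2 ?_⟩
  have hreg : c.2 ∈ Prod.snd '' C := ⟨c, hc, rfl⟩
  have hmem : c.1 ∈ statesAt D (f c.2) := hstates c.2 hreg ▸ hc
  rwa [← α.symm_apply_eq.2 (hαf c.2 hreg).symm] at hmem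

end Configurations

section Pumping

/-- The downward closure of the counting vectors of the configuration sets from which a word of
length `n` is accepted. -/
def acceptanceProfile (A : AFMA Sigma S) (n : ℕ) : LowerSet (Set S → ℕ) :=
  lowerClosure (registerCount '' {C | A.IsConfigSet C ∧ A.AcceptsLength n C})

theorem AcceptsLength.of_acceptanceProfile_le
    (hmn : A.acceptanceProfile m ≤ A.acceptanceProfile n) (hC : A.IsConfigSet C)
    (h : A.AcceptsLength m C) : A.AcceptsLength n C := by
  have hcount : registerCount C ∈ A.acceptanceProfile n :=
    hmn (subset_lowerClosure ⟨C, ⟨hC, h⟩, rfl⟩)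
  obtain ⟨_, ⟨D, ⟨hD, hacc⟩, rfl⟩, hle⟩ := mem_lowerClosure.1 hcount
  obtain ⟨α, hα, hCD⟩ := exists_deltaPerm_subset_mapConfigs hC hD hle
  exact hacc.of_subset_mapConfigs hα hCD

theorem AcceptsLength.add_of_forall_imp [Finite S]
    (hmn : ∀ C, A.IsConfigSet C → A.AcceptsLength m C → A.AcceptsLength n C) (k : ℕ)
    (hC : A.IsConfigSet C) (h : A.AcceptsLength (m + k) C) : A.AcceptsLength (n + k) C := by
  induction k generalizing C with
  | zero => exact hmn C hC h
  | succ k ih =>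
    obtain ⟨σ, C', hstep, hacc⟩ := acceptsLength_succ.1 h
    exact acceptsLength_succ.2 ⟨σ, C', hstep, ih (hC.setStep hstep) hacc⟩

theorem exists_pos_forall_acceptsLength_add [Finite S] (A : AFMA Sigma S) :
    ∃ N p, 0 < p ∧ ∀ C, A.IsConfigSet C → ∀ k, N ≤ k → A.AcceptsLength k C →
      A.AcceptsLength (k + p) C := by
  have := wellQuasiOrderedLE_lowerSet_of_linearOrder (α := ℕ)
  have := wellQuasiOrderedLE_lowerSet_pi (α := fun _ : Set S => ℕ)
  obtain ⟨m, n, hmn, hle⟩ := wellQuasiOrdered_le A.acceptanceProfile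
  refine ⟨m, n - m, Nat.sub_pos_of_lt hmn, fun C hC k hk h => ?_⟩
  obtain ⟨i, rfl⟩ := Nat.exists_eq_add_of_le hk
  have hadd := AcceptsLength.add_of_forall_imp
    (fun C hC => AcceptsLength.of_acceptanceProfile_le hle hC) i hC h
  rwa [show n + i = m + i + (n - m) by omega] at hadd

end Pumping

end AFMA

theorem afma_lengths_semilinear_general {Sigma S : Type} [Finite S] (A : AFMA Sigma S) :
    ∃ T : Finset (ℕ × ℕ),
      {n | ∃ w ∈ A.Lang, w.length = n} =
        ⋃ p ∈ T, {n | ∃ i : ℕ, n = p.1 + i * p.2} := by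
  obtain ⟨N, p, hp, hadd⟩ := A.exists_pos_forall_acceptsLength_add
  rw [A.lengths_lang_eq]
  exact exists_finset_eq_biUnion_progression hp fun k hk hN =>
    hadd _ A.isConfigSet_initial k hN hk

/-- Semi-linearity of lengths: the set of lengths of words accepted by a
one-register alternating finite-memory automaton is a finite union of linear
sets `{a + i·b : i ∈ ℕ}`. -/
theorem afma_lengths_semilinear {Sigma S : Type} [Infinite Sigma] [Fintype S]
    (A : AFMA Sigma S) :
    ∃ T : Finset (ℕ × ℕ),
      {n | ∃ w ∈ A.Lang, w.length = n} =
        ⋃ p ∈ T, {n | ∃ i : ℕ, n = p.1 + i * p.2} :=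
  afma_lengths_semilinear_general A
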